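/- For every integer n ≥ 4, the graph Γ_{D_n} is cubic (3-regular) and its automorphism group is isomorphic to the dihedral group of order 2n; it is generated by the rotation ω sending each vertex (x,i) to (x,i+1) together with the involution s that fixes the labels c and d coordinatewise as i ↦ −i (c_i ↦ c_{−i}, d_i ↦ d_{−i}) and swaps a_i with b_{−i}. -/

import Mathlib

/-- The graph `Γ_{D_n}` on vertex set `{a,b,c,d} × (ℤ/nℤ)` (the labels `a,b,c,d` are
encoded as `0,1,2,3 : Fin 4`), with edges, for every `i`:
`{a_i,b_i}, {a_i,c_i}, {b_i,c_i}, {c_i,d_i}, {a_i,b_{i+1}}, {d_i,d_{i+1}}`. -/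
def dnGraph (n : ℕ) : SimpleGraph (Fin 4 × ZMod n) :=
  SimpleGraph.fromEdgeSet (⋃ i : ZMod n,
    {s((0, i), (1, i)), s((0, i), (2, i)), s((1, i), (2, i)),
     s((2, i), (3, i)), s((0, i), (1, i + 1)), s((3, i), (3, i + 1))})

theorem dn_adj0 (n : ℕ) (i : ZMod n) (v : Fin 4 × ZMod n) :
    (dnGraph n).Adj (0, i) v ↔ v = (1, i) ∨ v = (2, i) ∨ v = (1, i + 1) := by
  obtain ⟨x, j⟩ := v
  fin_cases x <;> simp [dnGraph, Prod.ext_iff] <;> aesop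

theorem dn_adj1 (n : ℕ) (i : ZMod n) (v : Fin 4 × ZMod n) :
    (dnGraph n).Adj (1, i) v ↔ v = (0, i) ∨ v = (2, i) ∨ v = (0, i - 1) := by
  obtain ⟨x, j⟩ := v
  fin_cases x <;> simp [dnGraph, Prod.ext_iff, eq_sub_iff_add_eq] <;> aesop

theorem dn_adj2 (n : ℕ) (i : ZMod n) (v : Fin 4 × ZMod n) :
    (dnGraph n).Adj (2, i) v ↔ v = (0, i) ∨ v = (1, i) ∨ v = (3, i) := by
  obtain ⟨x, j⟩ := v
  fin_cases x <;> simp [dnGraph, Prod.ext_iff] <;> aesop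

theorem dn_ring1 {R : Type*} [CommRing R] (h : (1 : R) ≠ 0) (i : R) : i ≠ i - 1 := by
  intro h'; apply h; linear_combination h'

theorem dn_ring2 {R : Type*} [CommRing R] (h : (2 : R) ≠ 0) (i : R) : i + 1 ≠ i - 1 := by
  intro h'; apply h; linear_combination h'

theorem dn_ring3 {R : Type*} [CommRing R] (h : (3 : R) ≠ 0) (i : R) : i - 1 ≠ i + 1 + 1 := by
  intro h'; apply h; linear_combination -h'

theorem dn_ring4 {R : Type*} [CommRing R] (h : (3 : R) ≠ 0) (i : R) : i + 1 ≠ i - 1 - 1 := by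
  intro h'; apply h; linear_combination h'

theorem dn_one (n : ℕ) (hn : 4 ≤ n) : (1 : ZMod n) ≠ 0 := by
  intro h
  have : ((1 : ℕ) : ZMod n) = 0 := by exact_mod_cast h
  rw [ZMod.natCast_eq_zero_iff] at this
  have := Nat.le_of_dvd (by norm_num) this
  omega

theorem dn_two (n : ℕ) (hn : 4 ≤ n) : (2 : ZMod n) ≠ 0 := by
  intro h
  have : ((2 : ℕ) : ZMod n) = 0 := by exact_mod_cast h
  rw [ZMod.natCast_eq_zero_iff] at this
  have := Nat.le_of_dvd (by norm_num) this
  omega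

theorem dn_three (n : ℕ) (hn : 4 ≤ n) : (3 : ZMod n) ≠ 0 := by
  intro h
  have : ((3 : ℕ) : ZMod n) = 0 := by exact_mod_cast h
  rw [ZMod.natCast_eq_zero_iff] at this
  have := Nat.le_of_dvd (by norm_num) this
  omega

theorem dn_adj3 (n : ℕ) (hn : 4 ≤ n) (i : ZMod n) (v : Fin 4 × ZMod n) :
    (dnGraph n).Adj (3, i) v ↔ v = (2, i) ∨ v = (3, i + 1) ∨ v = (3, i - 1) := by
  have h1 := dn_one n hn
  obtain ⟨x, j⟩ := v
  fin_cases x <;> simp [dnGraph, Prod.ext_iff, eq_sub_iff_add_eq] <;> aesop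

/-- `v` lies on a triangle. -/
def dnT (n : ℕ) (v : Fin 4 × ZMod n) : Prop :=
  ∃ u w, (dnGraph n).Adj v u ∧ (dnGraph n).Adj v w ∧ (dnGraph n).Adj u w

theorem dnT_iff (n : ℕ) (hn : 4 ≤ n) (v : Fin 4 × ZMod n) : dnT n v ↔ v.1 ≠ 3 := by
  have h1 := dn_one n hn
  have h2 := dn_two n hn
  have h3 := dn_three n hn
  obtain ⟨x, i⟩ := v
  fin_cases x
  · simp only [dnT]
    refine iff_of_true ⟨(1, i), (2, i), ?_⟩ (by simp)
    simp [dn_adj0, dn_adj1]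
  · simp only [dnT]
    refine iff_of_true ⟨(0, i), (2, i), ?_⟩ (by simp)
    simp [dn_adj0, dn_adj1]
  · simp only [dnT]
    refine iff_of_true ⟨(0, i), (1, i), ?_⟩ (by simp)
    simp [dn_adj0, dn_adj2]
  · refine iff_of_false ?_ (by simp)
    rintro ⟨u, w, hu, hw, huw⟩
    change (dnGraph n).Adj (3, i) u at hu
    change (dnGraph n).Adj (3, i) w at hw
    rw [dn_adj3 n hn] at hu hw
    rcases hu with rfl | rfl | rfl <;> rcases hw with rfl | rfl | rfl <;>
      simp [dn_adj2, dn_adj3 n hn] at huw <;>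
      grind [dn_ring1 h1 i, dn_ring2 h2 i, dn_ring3 h3 i, dn_ring4 h3 i]

theorem dnT_map (n : ℕ) (f : dnGraph n ≃g dnGraph n) (v : Fin 4 × ZMod n) :
    dnT n v → dnT n (f v) := by
  rintro ⟨u, w, h1, h2, h3⟩
  exact ⟨f u, f w, f.map_adj_iff.2 h1, f.map_adj_iff.2 h2, f.map_adj_iff.2 h3⟩

theorem dnT_map_iff (n : ℕ) (f : dnGraph n ≃g dnGraph n) (v : Fin 4 × ZMod n) :
    dnT n (f v) ↔ dnT n v := by
  refine ⟨fun h => ?_, dnT_map n f v⟩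
  have := dnT_map n f.symm _ h
  simpa using this

theorem dn_label3 (n : ℕ) (hn : 4 ≤ n) (f : dnGraph n ≃g dnGraph n) (v : Fin 4 × ZMod n) :
    (f v).1 = 3 ↔ v.1 = 3 := by
  have := dnT_map_iff n f v
  rw [dnT_iff n hn, dnT_iff n hn] at this
  tauto

theorem dn_label2 (n : ℕ) (hn : 4 ≤ n) (f : dnGraph n ≃g dnGraph n) (i : ZMod n) :
    (f (2, i)).1 = 2 := by
  have h := dn_label3 n hn f (2, i)
  have h' := dn_label3 n hn f (3, i)
  have ha : (dnGraph n).Adj (f (3, i)) (f (2, i)) :=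
    f.map_adj_iff.2 (by simp [dn_adj3 n hn])
  generalize f (2, i) = u at *
  generalize f (3, i) = w at *
  obtain ⟨x, j⟩ := w
  obtain rfl : x = 3 := by simpa using h'
  rw [dn_adj3 n hn] at ha
  rcases ha with rfl | rfl | rfl <;> simp_all

theorem dn_label2' (n : ℕ) (hn : 4 ≤ n) (f : dnGraph n ≃g dnGraph n) (v : Fin 4 × ZMod n) :
    (f v).1 = 2 ↔ v.1 = 2 := by
  obtain ⟨x, i⟩ := v
  constructor
  · intro h
    have := dn_label2 n hn f.symm (f (x, i)).2
    have e : (2, (f (x, i)).2) = f (x, i) := Prod.ext h.symm rfl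
    rw [e] at this
    simpa using this
  · intro h
    obtain rfl : x = 2 := h
    exact dn_label2 n hn f i

theorem dn_step (n : ℕ) (hn : 4 ≤ n) (f : dnGraph n ≃g dnGraph n) (i j : ZMod n)
    (h0 : f (0, i) = (0, j)) (h1 : f (1, i) = (1, j)) :
    f (0, i + 1) = (0, j + 1) ∧ f (1, i + 1) = (1, j + 1) := by
  have hb : f (1, i + 1) = (1, j + 1) := by
    have ha : (dnGraph n).Adj (f (0, i)) (f (1, i + 1)) :=
      f.map_adj_iff.2 (by simp [dn_adj0])
    rw [h0, dn_adj0] at ha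
    rcases ha with ha | ha | ha
    · rw [← h1] at ha
      have := f.injective ha
      simp [dn_one n hn] at this
    · have := (dn_label2' n hn f (1, i + 1)).1 (by rw [ha])
      simp at this
    · exact ha
  refine ⟨?_, hb⟩
  have ha : (dnGraph n).Adj (f (1, i + 1)) (f (0, i + 1)) :=
    f.map_adj_iff.2 (by simp [dn_adj1])
  rw [hb, dn_adj1] at ha
  rcases ha with ha | ha | ha
  · exact ha
  · have := (dn_label2' n hn f (0, i + 1)).1 (by rw [ha])
    simp at this
  · rw [add_sub_cancel_right, ← h0] at ha
    have := f.injective ha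
    simp [dn_one n hn] at this

/-- Two adjacent vertices to `(2,k)`. -/
theorem dn_one_of_zero (n : ℕ) (hn : 4 ≤ n) (f : dnGraph n ≃g dnGraph n) (i j : ZMod n)
    (h0 : f (0, i) = (0, j)) :
    f (1, i) = (1, j) ∧ f (2, i) = (2, j) ∧ f (3, i) = (3, j) := by
  have h2 : f (2, i) = (2, j) := by
    have ha : (dnGraph n).Adj (f (0, i)) (f (2, i)) := f.map_adj_iff.2 (by simp [dn_adj0])
    have hl := dn_label2 n hn f i
    rw [h0, dn_adj0] at ha
    rcases ha with ha | ha | ha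
    · rw [ha] at hl; simp at hl
    · exact ha
    · rw [ha] at hl; simp at hl
  refine ⟨?_, h2, ?_⟩
  · have ha : (dnGraph n).Adj (f (2, i)) (f (1, i)) := f.map_adj_iff.2 (by simp [dn_adj2])
    rw [h2, dn_adj2] at ha
    rcases ha with ha | ha | ha
    · rw [← h0] at ha
      have := f.injective ha
      simp at this
    · exact ha
    · have := (dn_label3 n hn f (1, i)).1 (by rw [ha])
      simp at this
  · have ha : (dnGraph n).Adj (f (2, i)) (f (3, i)) := f.map_adj_iff.2 (by simp [dn_adj2])
    have hl := (dn_label3 n hn f (3, i)).2 rfl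
    rw [h2, dn_adj2] at ha
    rcases ha with ha | ha | ha
    · rw [ha] at hl; simp at hl
    · rw [ha] at hl; simp at hl
    · exact ha

theorem dn_all (n : ℕ) [NeZero n] (hn : 4 ≤ n) (f : dnGraph n ≃g dnGraph n) (j : ZMod n)
    (h0 : f (0, 0) = (0, j)) (v : Fin 4 × ZMod n) : f v = (v.1, v.2 + j) := by
  have key : ∀ k : ℕ, f (0, (k : ZMod n)) = (0, (k : ZMod n) + j) := by
    intro k
    induction k with
    | zero => simpa using h0
    | succ k ih =>
      have := (dn_step n hn f _ _ ih (dn_one_of_zero n hn f _ _ ih).1).1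
      rw [Nat.cast_succ, this]
      congr 1
      ring
  obtain ⟨x, i⟩ := v
  have hk := key i.val
  rw [ZMod.natCast_zmod_val] at hk
  have h := dn_one_of_zero n hn f _ _ hk
  fin_cases x
  · exact hk
  · exact h.1
  · exact h.2.1
  · exact h.2.2

/-- rotation by `j` -/
def dnRot (n : ℕ) (hn : 4 ≤ n) (j : ZMod n) : dnGraph n ≃g dnGraph n where
  toFun v := (v.1, v.2 + j)
  invFun v := (v.1, v.2 - j)
  left_inv v := by simp
  right_inv v := by simp
  map_rel_iff' := by
    rintro ⟨x, i⟩ ⟨y, k⟩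
    fin_cases x <;> fin_cases y <;>
      simp [dn_adj0, dn_adj1, dn_adj2, dn_adj3 n hn] <;> grind

/-- swap of the labels `0` and `1` -/
def dnSw : Fin 4 → Fin 4 := ![1, 0, 2, 3]

/-- the reflection -/
def dnRef (n : ℕ) (hn : 4 ≤ n) : dnGraph n ≃g dnGraph n where
  toFun v := (dnSw v.1, -v.2)
  invFun v := (dnSw v.1, -v.2)
  left_inv v := by obtain ⟨x, i⟩ := v; fin_cases x <;> simp [dnSw]
  right_inv v := by obtain ⟨x, i⟩ := v; fin_cases x <;> simp [dnSw]
  map_rel_iff' := by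
    rintro ⟨x, i⟩ ⟨y, k⟩
    fin_cases x <;> fin_cases y <;>
      simp [dnSw, dn_adj0, dn_adj1, dn_adj2, dn_adj3 n hn] <;> grind

theorem dnRot_apply (n : ℕ) (hn : 4 ≤ n) (j : ZMod n) (v : Fin 4 × ZMod n) :
    dnRot n hn j v = (v.1, v.2 + j) := rfl

theorem dnRef_apply (n : ℕ) (hn : 4 ≤ n) (v : Fin 4 × ZMod n) :
    dnRef n hn v = (dnSw v.1, -v.2) := rfl

theorem dnSw_sw (x : Fin 4) : dnSw (dnSw x) = x := by
  fin_cases x <;> rfl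

theorem dn_classify (n : ℕ) [NeZero n] (hn : 4 ≤ n) (f : dnGraph n ≃g dnGraph n) :
    (∃ j, f = dnRot n hn j) ∨ ∃ j, f = dnRef n hn * dnRot n hn j := by
  have l2 := dn_label2' n hn f (0, 0)
  have l3 := dn_label3 n hn f (0, 0)
  rcases hf : f (0, 0) with ⟨x, j⟩
  rw [hf] at l2 l3
  fin_cases x
  · left
    refine ⟨j, ?_⟩
    ext1 v
    rw [dn_all n hn f j hf v, dnRot_apply]
  · right
    have h0 : (dnRef n hn * f) (0, 0) = (0, -j) := by
      rw [RelIso.mul_apply, hf, dnRef_apply]; rfl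
    refine ⟨-j, ?_⟩
    ext1 v
    have h := dn_all n hn _ _ h0 v
    rw [RelIso.mul_apply] at h ⊢
    rw [dnRot_apply, ← h, dnRef_apply, dnRef_apply]
    simp [dnSw_sw]
  · simp at l2
  · simp at l3

/-- the isomorphism from the dihedral group -/
def dnHom (n : ℕ) (hn : 4 ≤ n) : DihedralGroup n →* (dnGraph n ≃g dnGraph n) :=
  MonoidHom.mk' (fun g => match g with
    | .r i => dnRot n hn i
    | .sr i => dnRef n hn * dnRot n hn i) (by
    rintro (i | i) (j | j) <;> ext1 v <;>
      simp only [DihedralGroup.r_mul_r, DihedralGroup.r_mul_sr, DihedralGroup.sr_mul_r,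
        DihedralGroup.sr_mul_sr, RelIso.mul_apply, dnRot_apply, dnRef_apply, dnSw_sw] <;>
      refine Prod.ext rfl ?_ <;> simp only [] <;> ring)

theorem dnHom_bij (n : ℕ) [NeZero n] (hn : 4 ≤ n) : Function.Bijective (dnHom n hn) := by
  constructor
  · rintro (i | i) (j | j) h <;>
      have h' := congrArg (fun f : dnGraph n ≃g dnGraph n => f (0, 0)) h <;>
      simpa [dnHom, RelIso.mul_apply, dnRot_apply, dnRef_apply, dnSw] using h'
  · intro f
    rcases dn_classify n hn f with ⟨j, rfl⟩ | ⟨j, rfl⟩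
    · exact ⟨.r j, rfl⟩
    · exact ⟨.sr j, rfl⟩

theorem dnRot_pow (n : ℕ) (hn : 4 ≤ n) (k : ℕ) :
    dnRot n hn 1 ^ k = dnRot n hn (k : ZMod n) := by
  induction k with
  | zero => ext1 v; simp [dnRot_apply]
  | succ k ih =>
    rw [pow_succ, ih]
    ext1 v
    rw [RelIso.mul_apply, dnRot_apply, dnRot_apply, dnRot_apply]
    refine Prod.ext rfl ?_
    change v.2 + 1 + (k : ZMod n) = v.2 + ((k + 1 : ℕ) : ZMod n)
    push_cast
    ring

open scoped Classical in
/-- For `n ≥ 4`, the graph `Γ_{D_n}` is cubic and its automorphism group is isomorphic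
to the dihedral group of order `2n`; it is generated by the rotation
`ω : (x,i) ↦ (x,i+1)` together with the involution `s` with `a_i ↦ b_{-i}`,
`b_i ↦ a_{-i}`, `c_i ↦ c_{-i}`, `d_i ↦ d_{-i}`. -/
theorem dnGraph_isRegular_and_aut (n : ℕ) [NeZero n] (hn : 4 ≤ n) :
    (dnGraph n).IsRegularOfDegree 3 ∧
    ∃ ω σ : dnGraph n ≃g dnGraph n,
      (∀ v : Fin 4 × ZMod n, ω v = (v.1, v.2 + 1)) ∧
      (∀ i : ZMod n, σ (0, i) = (1, -i)) ∧
      (∀ i : ZMod n, σ (1, i) = (0, -i)) ∧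
      (∀ i : ZMod n, σ (2, i) = (2, -i)) ∧
      (∀ i : ZMod n, σ (3, i) = (3, -i)) ∧
      Subgroup.closure {ω, σ} = ⊤ ∧
      Nonempty ((dnGraph n ≃g dnGraph n) ≃* DihedralGroup n) := by
  have e1 := dn_one n hn
  have e2 := dn_two n hn
  refine ⟨?_, dnRot n hn 1, dnRef n hn, fun v => rfl, fun v => rfl, fun v => rfl, fun v => rfl,
    fun v => rfl, ?_, ⟨(MulEquiv.ofBijective _ (dnHom_bij n hn)).symm⟩⟩
  · rintro ⟨x, i⟩
    rw [← SimpleGraph.card_neighborFinset_eq_degree, Finset.card_eq_three]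
    fin_cases x
    · refine ⟨(1, i), (2, i), (1, i + 1), by simp, by simpa using e1, by simp, ?_⟩
      ext v
      simpa using dn_adj0 n i v
    · refine ⟨(0, i), (2, i), (0, i - 1), by simp, ?_, by simp, ?_⟩
      · simp only [ne_eq, Prod.mk.injEq]; grind [dn_ring1 e1 i, dn_ring2 e2 i]
      ext v
      simpa using dn_adj1 n i v
    · refine ⟨(0, i), (1, i), (3, i), by simp, by simp, by simp, ?_⟩
      ext v
      simpa using dn_adj2 n i v
    · refine ⟨(2, i), (3, i + 1), (3, i - 1), by simp, by simp, ?_, ?_⟩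
      · simp only [ne_eq, Prod.mk.injEq]; grind [dn_ring1 e1 i, dn_ring2 e2 i]
      ext v
      simpa using dn_adj3 n hn i v
  · rw [eq_top_iff]
    intro f _
    have hr : ∀ j : ZMod n, dnRot n hn j ∈ Subgroup.closure {dnRot n hn 1, dnRef n hn} := by
      intro j
      rw [← ZMod.natCast_zmod_val j, ← dnRot_pow]
      exact Subgroup.pow_mem _ (Subgroup.subset_closure (by simp)) _
    rcases dn_classify n hn f with ⟨j, rfl⟩ | ⟨j, rfl⟩
    · exact hr j
    · exact Subgroup.mul_mem _ (Subgroup.subset_closure (by simp)) (hr j)
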